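/- Let m > 0 be a real number and let ψ : EuclideanSpace ℝ (Fin k) → EuclideanSpace ℝ (Fin n) be a smooth map satisfying Δψ(x) = −2m·ψ(x) for all x, with ψ(x₀) ≠ 0 for some point x₀. Define φ : EuclideanSpace ℝ (Fin k) → EuclideanSpace ℝ (Fin n) × ℝ by φ(x) = (ψ(x), 1/√2). Then Δφ(x) = (−2m·ψ(x), 0) for all x, φ satisfies the buckling eigenmap equation Δ²φ(x) = −2m·Δφ(x) for all x, and there is no real number λ such that Δφ(x) = λ·φ(x) for all x. -/

import Mathlib

/-- Componentwise Laplacian of a map `EuclideanSpace ℝ (Fin k) → F` with respect to the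
standard orthonormal coordinates: `Δφ(x) = ∑ i, ∂²φ/∂xᵢ²(x)`. On a product space
`EuclideanSpace ℝ (Fin n) × ℝ` this is the factorwise Laplacian. -/
noncomputable def lap {k : ℕ} {F : Type*} [NormedAddCommGroup F] [NormedSpace ℝ F]
    (φ : EuclideanSpace ℝ (Fin k) → F) (x : EuclideanSpace ℝ (Fin k)) : F :=
  ∑ i : Fin k,
    fderiv ℝ (fun y => fderiv ℝ φ y (EuclideanSpace.single i 1)) x (EuclideanSpace.single i 1)

theorem lap_pair_const {k : ℕ} {F : Type*} [NormedAddCommGroup F] [NormedSpace ℝ F]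
    (ψ : EuclideanSpace ℝ (Fin k) → F) (hψ : ContDiff ℝ (⊤ : ℕ∞) ψ) (c : ℝ)
    (x : EuclideanSpace ℝ (Fin k)) :
    lap (fun y => ((ψ y, c) : F × ℝ)) x = (lap ψ x, 0) := by
  have hd : Differentiable ℝ ψ := hψ.differentiable (by simp)
  have h1 : ∀ (g : EuclideanSpace ℝ (Fin k) → F) (d : ℝ) (y v : EuclideanSpace ℝ (Fin k)),
      DifferentiableAt ℝ g y → fderiv ℝ (fun z => ((g z, d) : F × ℝ)) y v
        = (fderiv ℝ g y v, 0) := by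
    intro g d y v hg
    rw [(hg.hasFDerivAt.prodMk (hasFDerivAt_const d y)).fderiv]
    simp
  have h2 : Differentiable ℝ (fderiv ℝ ψ) :=
    (hψ.fderiv_right (m := 1) (by
      have h : ((1 + 1 : ℕ∞)) ≤ ⊤ := le_top
      exact WithTop.coe_le_coe.mpr h)).differentiable (by simp)
  unfold lap
  have h3 : ∀ i : Fin k, fderiv ℝ (fun y => fderiv ℝ (fun z => ((ψ z, c) : F × ℝ)) y
      (EuclideanSpace.single i 1)) x (EuclideanSpace.single i 1)
      = (fderiv ℝ (fun y => fderiv ℝ ψ y (EuclideanSpace.single i 1)) x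
          (EuclideanSpace.single i 1), 0) := by
    intro i
    have h4 : (fun y => fderiv ℝ (fun z => ((ψ z, c) : F × ℝ)) y (EuclideanSpace.single i 1))
        = fun y => (fderiv ℝ ψ y (EuclideanSpace.single i 1), 0) :=
      funext fun y => h1 ψ c y _ (hd y)
    rw [h4]
    exact h1 _ 0 x _ ((h2 x).clm_apply (differentiableAt_const _))
  rw [Finset.sum_congr rfl fun i _ => h3 i]
  ext <;> simp [Prod.fst_sum, Prod.snd_sum]

theorem lap_const_smul {k : ℕ} {F : Type*} [NormedAddCommGroup F] [NormedSpace ℝ F]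
    (ψ : EuclideanSpace ℝ (Fin k) → F) (hψ : ContDiff ℝ (⊤ : ℕ∞) ψ) (a : ℝ)
    (x : EuclideanSpace ℝ (Fin k)) :
    lap (fun y => a • ψ y) x = a • lap ψ x := by
  have hd : Differentiable ℝ ψ := hψ.differentiable (by simp)
  have h2 : Differentiable ℝ (fderiv ℝ ψ) :=
    (hψ.fderiv_right (m := 1) (by
      have h : ((1 + 1 : ℕ∞)) ≤ ⊤ := le_top
      exact WithTop.coe_le_coe.mpr h)).differentiable (by simp)
  unfold lap
  rw [Finset.smul_sum]
  refine Finset.sum_congr rfl fun i _ => ?_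
  have h4 : (fun y => fderiv ℝ (fun z => a • ψ z) y (EuclideanSpace.single i 1))
      = fun y => a • fderiv ℝ ψ y (EuclideanSpace.single i 1) := by
    funext y
    rw [fderiv_fun_const_smul (hd y) a]
    rfl
  have h5 : DifferentiableAt ℝ (fun y => fderiv ℝ ψ y (EuclideanSpace.single i 1)) x :=
    (h2 x).clm_apply (differentiableAt_const _)
  rw [h4, fderiv_fun_const_smul h5 a]
  rfl

theorem buckling_eigenmap_example {k n : ℕ} (m : ℝ) (hm : 0 < m)
    (ψ : EuclideanSpace ℝ (Fin k) → EuclideanSpace ℝ (Fin n))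
    (hψ : ContDiff ℝ (⊤ : ℕ∞) ψ)
    (heigen : ∀ x, lap ψ x = (-(2 * m)) • ψ x)
    (x₀ : EuclideanSpace ℝ (Fin k)) (hx₀ : ψ x₀ ≠ 0) :
    (∀ x, lap (fun y => ((ψ y, 1 / Real.sqrt 2) : EuclideanSpace ℝ (Fin n) × ℝ)) x
        = ((-(2 * m)) • ψ x, 0)) ∧
      (∀ x, lap (lap (fun y => ((ψ y, 1 / Real.sqrt 2) : EuclideanSpace ℝ (Fin n) × ℝ))) x
        = (-(2 * m)) •
            lap (fun y => ((ψ y, 1 / Real.sqrt 2) : EuclideanSpace ℝ (Fin n) × ℝ)) x) ∧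
      ¬∃ lam : ℝ, ∀ x,
        lap (fun y => ((ψ y, 1 / Real.sqrt 2) : EuclideanSpace ℝ (Fin n) × ℝ)) x
          = lam • ((ψ x, 1 / Real.sqrt 2) : EuclideanSpace ℝ (Fin n) × ℝ) := by
  have hA : ∀ x, lap (fun y => ((ψ y, 1 / Real.sqrt 2) : EuclideanSpace ℝ (Fin n) × ℝ)) x
      = ((-(2 * m)) • ψ x, 0) := by
    intro x
    rw [lap_pair_const ψ hψ, heigen]
  refine ⟨hA, ?_, ?_⟩
  · intro x
    rw [funext hA, lap_pair_const (fun y => (-(2 * m)) • ψ y) (hψ.const_smul _),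
      lap_const_smul ψ hψ, heigen]
    simp
  · rintro ⟨lam, h⟩
    have h0 := h x₀
    rw [hA] at h0
    have e2 := congrArg Prod.snd h0
    have e1 := congrArg Prod.fst h0
    have hl : lam = 0 := by simpa using e2
    subst hl
    have : m = 0 ∨ ψ x₀ = 0 := by simpa using e1
    exact this.elim hm.ne' hx₀
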